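/- There exist absolute constants c > 0 and c′ > 0 such that for every prime power q and every point set P ⊆ 𝔽_q³ with |P| ≥ c·q, the number of 4-element subsets of P that are critical coplanar (affinely dependent with every 3-element subset affinely independent) is at least c′·|P|⁴/q. -/

import Mathlib

/-- A `4`-element subset of `𝔽_q³` is critical coplanar if it is affinely dependent
(coplanar) while every proper subset of it is affinely independent (no three of the four
points are collinear). -/
def IsCriticalCoplanar (F : Type*) [Field F] (t : Finset (Fin 3 → F)) : Prop :=
  t.card = 4 ∧ ¬ AffineIndependent F ((↑) : t → (Fin 3 → F)) ∧
    ∀ s : Finset (Fin 3 → F), s ⊂ t → AffineIndependent F ((↑) : s → (Fin 3 → F))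

namespace CritCop

open Finset

variable {F : Type} [Field F]

/-- Cross product of two vectors vanishes. -/
def Par (u v : Fin 3 → F) : Prop :=
  u 0 * v 1 = u 1 * v 0 ∧ u 0 * v 2 = u 2 * v 0 ∧ u 1 * v 2 = u 2 * v 1

/-- Collinearity (allowing coincidences). -/
def Col (a b c : Fin 3 → F) : Prop := Par (b - a) (c - a)

/-- dot product -/
def dot (u v : Fin 3 → F) : F := u 0 * v 0 + u 1 * v 1 + u 2 * v 2

theorem Par.exists_smul {u v : Fin 3 → F} (hu : u ≠ 0) (h : Par u v) : ∃ t : F, v = t • u := by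
  obtain ⟨i, hi⟩ := Function.ne_iff.mp hu
  obtain ⟨h1, h2, h3⟩ := h
  refine ⟨v i / u i, ?_⟩
  simp only [Pi.zero_apply] at hi
  funext j
  simp only [Pi.smul_apply, smul_eq_mul]
  rw [div_mul_eq_mul_div, eq_div_iff hi]
  fin_cases i <;> fin_cases j <;> simp <;> grind

theorem par_smul (u : Fin 3 → F) (s t : F) : Par (s • u) (t • u) := by
  refine ⟨?_, ?_, ?_⟩ <;> simp <;> ring

theorem col_iff {a b c : Fin 3 → F} (hab : a ≠ b) : Col a b c ↔ ∃ t : F, c = a + t • (b - a) := by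
  constructor
  · intro h
    obtain ⟨t, ht⟩ := Par.exists_smul (sub_ne_zero.mpr hab.symm) h
    exact ⟨t, by rw [← ht]; abel⟩
  · rintro ⟨t, rfl⟩
    have := par_smul (b - a) 1 t
    simpa [Col] using this

theorem Col.swap12 {a b c : Fin 3 → F} (h : Col a b c) : Col b a c := by
  obtain ⟨h1, h2, h3⟩ := h
  simp only [Pi.sub_apply] at h1 h2 h3
  refine ⟨?_, ?_, ?_⟩ <;> simp only [Pi.sub_apply] <;> grind

theorem Col.swap23 {a b c : Fin 3 → F} (h : Col a b c) : Col a c b := by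
  obtain ⟨h1, h2, h3⟩ := h
  simp only [Pi.sub_apply] at h1 h2 h3
  refine ⟨?_, ?_, ?_⟩ <;> simp only [Pi.sub_apply] <;> grind

theorem col_aab (a b : Fin 3 → F) : Col a a b := by simp [Col, Par]
theorem col_aba (a b : Fin 3 → F) : Col a b a := by simp [Col, Par]
theorem col_abb (a b : Fin 3 → F) : Col a b b := by simp [Col, Par, mul_comm]

theorem Col.trans {a b c d : Fin 3 → F} (hab : a ≠ b) (h1 : Col a b c) (h2 : Col a b d) :
    Col a c d := by
  obtain ⟨s, rfl⟩ := (col_iff hab).1 h1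
  obtain ⟨t, rfl⟩ := (col_iff hab).1 h2
  simpa [Col] using par_smul (b - a) s t

/-- three points on the line `ab` are collinear -/
theorem Col.three {a b c d e : Fin 3 → F} (hab : a ≠ b) (h1 : Col a b c) (h2 : Col a b d)
    (h3 : Col a b e) : Col c d e := by
  by_cases hac : a = c
  · subst hac; exact h2.trans hab h3
  · have h4 : Col c a d := (h1.trans hab h2).swap12
    have h5 : Col c a e := (h1.trans hab h3).swap12
    exact h4.trans (Ne.symm hac) h5

theorem Col.dot_eq {a b c v : Fin 3 → F} {s : F} (hab : a ≠ b) (h : Col a b c)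
    (ha : dot v a = s) (hb : dot v b = s) : dot v c = s := by
  obtain ⟨t, rfl⟩ := (col_iff hab).1 h
  simp only [dot, Pi.add_apply, Pi.smul_apply, Pi.sub_apply, smul_eq_mul] at *
  grind

/-- ordered critical coplanar quadruple -/
def Quad (a b c d : Fin 3 → F) : Prop :=
  (∃ v : Fin 3 → F, ∃ s : F, v ≠ 0 ∧ dot v a = s ∧ dot v b = s ∧ dot v c = s ∧ dot v d = s) ∧
  ¬ Col a b c ∧ ¬ Col a b d ∧ ¬ Col a c d ∧ ¬ Col b c d

theorem exists_normal {a b c : Fin 3 → F} (h : ¬ Col a b c) :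
    ∃ v : Fin 3 → F, ∃ s : F, v ≠ 0 ∧ dot v a = s ∧ dot v b = s ∧ dot v c = s := by
  refine ⟨![(b - a) 1 * (c - a) 2 - (b - a) 2 * (c - a) 1,
    (b - a) 2 * (c - a) 0 - (b - a) 0 * (c - a) 2,
    (b - a) 0 * (c - a) 1 - (b - a) 1 * (c - a) 0], _, ?_, rfl, ?_, ?_⟩
  · intro h0
    apply h
    have e0 := congrFun h0 0
    have e1 := congrFun h0 1
    have e2 := congrFun h0 2
    simp only [Matrix.cons_val, Pi.zero_apply] at e0 e1 e2
    exact ⟨by linear_combination e2, by linear_combination -e1, by linear_combination e0⟩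
  · simp [dot]; ring
  · simp [dot]; ring

theorem affInd_of_not_col {a b c : Fin 3 → F} (h : ¬ Col a b c) (s : Finset (Fin 3 → F))
    (hs : ∀ x ∈ s, x = a ∨ x = b ∨ x = c) : AffineIndependent F ((↑) : s → (Fin 3 → F)) := by
  have h1 : AffineIndependent F ![a, b, c] := by
    rw [affineIndependent_iff_not_collinear_set]
    intro hc
    apply h
    rw [collinear_iff_of_mem (p₀ := a) (by simp)] at hc
    obtain ⟨v, hv⟩ := hc
    obtain ⟨r, hr⟩ := hv b (by simp)
    obtain ⟨t, ht⟩ := hv c (by simp)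
    rw [hr, ht]
    simpa [Col] using par_smul v r t
  have h2 := h1.range
  exact AffineIndependent.mono (s := (s : Set (Fin 3 → F))) h2 (by
    intro x hx
    rcases hs x hx with rfl | rfl | rfl
    · exact ⟨0, rfl⟩
    · exact ⟨1, rfl⟩
    · exact ⟨2, rfl⟩)

open Classical in
theorem Quad.isCritical {a b c d : Fin 3 → F} (h : Quad a b c d) :
    IsCriticalCoplanar F ({a, b, c, d} : Finset (Fin 3 → F)) := by
  obtain ⟨⟨v, s, hv, ha, hb, hc, hd⟩, h1, h2, h3, h4⟩ := h
  have nab : a ≠ b := by rintro rfl; exact h1 (col_aab _ _)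
  have nac : a ≠ c := by rintro rfl; exact h1 (col_aba _ _)
  have nad : a ≠ d := by rintro rfl; exact h2 (col_aba _ _)
  have nbc : b ≠ c := by rintro rfl; exact h1 (col_abb _ _)
  have nbd : b ≠ d := by rintro rfl; exact h2 (col_abb _ _)
  have ncd : c ≠ d := by rintro rfl; exact h3 (col_abb _ _)
  have hcard : ({a, b, c, d} : Finset (Fin 3 → F)).card = 4 := by
    rw [card_insert_of_notMem, card_insert_of_notMem, card_insert_of_notMem, card_singleton] <;>
      simp [*]
  refine ⟨hcard, ?_, ?_⟩
  · intro hi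
    have htop := hi.vectorSpan_eq_top_of_card_eq_finrank_add_one (by simp [hcard])
    let f : (Fin 3 → F) →ₗ[F] F :=
      { toFun := dot v
        map_add' := by intro x y; simp [dot]; ring
        map_smul' := by intro t x; simp [dot]; ring }
    have hle : vectorSpan F (Set.range ((↑) : ({a, b, c, d} : Finset (Fin 3 → F)) → (Fin 3 → F)))
        ≤ LinearMap.ker f := by
      rw [vectorSpan, Submodule.span_le]
      rintro _ ⟨_, ⟨⟨x, hx⟩, rfl⟩, _, ⟨⟨y, hy⟩, rfl⟩, rfl⟩
      have key : ∀ x ∈ ({a, b, c, d} : Finset (Fin 3 → F)), f x = s := by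
        intro x hx
        simp only [mem_insert, mem_singleton] at hx
        rcases hx with rfl | rfl | rfl | rfl <;> assumption
      simp [key x hx, key y hy]
    rw [htop, top_le_iff, LinearMap.ker_eq_top] at hle
    apply hv
    have e : ∀ x, dot v x = 0 := fun x => congrArg (fun g => g x) hle
    have e0 := e ![1, 0, 0]
    have e1 := e ![0, 1, 0]
    have e2 := e ![0, 0, 1]
    simp [dot] at e0 e1 e2
    funext i
    fin_cases i <;> simpa
  · intro s hs
    obtain ⟨hsub, x, hx, hxs⟩ := Finset.ssubset_iff_subset_ne.1 hs |>.1 |> fun h =>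
      (⟨h, Finset.exists_of_ssubset hs⟩ : _ ∧ _)
    have hm : ∀ y ∈ s, (y = a ∨ y = b ∨ y = c ∨ y = d) ∧ y ≠ x := by
      intro y hy
      refine ⟨by simpa using hsub hy, ?_⟩
      rintro rfl; exact hxs hy
    simp only [mem_insert, mem_singleton] at hx
    rcases hx with rfl | rfl | rfl | rfl
    · exact affInd_of_not_col h4 s (fun y hy => by have := hm y hy; tauto)
    · exact affInd_of_not_col h3 s (fun y hy => by have := hm y hy; tauto)
    · exact affInd_of_not_col h2 s (fun y hy => by have := hm y hy; tauto)
    · exact affInd_of_not_col h1 s (fun y hy => by have := hm y hy; tauto)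

open Classical in
/-- The ordered critical quadruples of `P`. -/
noncomputable def quads (P : Finset (Fin 3 → F)) :
    Finset ((Fin 3 → F) × (Fin 3 → F) × (Fin 3 → F) × (Fin 3 → F)) :=
  (P ×ˢ P ×ˢ P ×ˢ P).filter (fun x => Quad x.1 x.2.1 x.2.2.1 x.2.2.2)

open Classical in
theorem card_quads_le (P : Finset (Fin 3 → F)) :
    (quads P).card ≤ 256 * ({t : Finset (Fin 3 → F) | t ⊆ P ∧ IsCriticalCoplanar F t}).ncard := by
  have e : {t : Finset (Fin 3 → F) | t ⊆ P ∧ IsCriticalCoplanar F t}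
      = ((P.powerset.filter (fun t => IsCriticalCoplanar F t) : Finset (Finset (Fin 3 → F))) :
        Set (Finset (Fin 3 → F))) := by
    ext t; simp
  rw [e, Set.ncard_coe_finset]
  apply Finset.card_le_mul_card_image_of_maps_to
    (f := fun x => ({x.1, x.2.1, x.2.2.1, x.2.2.2} : Finset (Fin 3 → F)))
  · rintro ⟨a, b, c, d⟩ hx
    simp only [quads, mem_filter, mem_product] at hx
    simp only [mem_filter, mem_powerset]
    refine ⟨?_, hx.2.isCritical⟩
    intro y hy
    simp only [mem_insert, mem_singleton] at hy
    rcases hy with rfl | rfl | rfl | rfl <;> tauto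
  · intro t ht
    have h4 : t.card = 4 := (mem_filter.1 ht).2.1
    calc _ ≤ (t ×ˢ t ×ˢ t ×ˢ t).card := by
          apply card_le_card
          rintro ⟨a, b, c, d⟩ hx
          simp only [mem_filter] at hx
          rw [← hx.2]
          simp
      _ = 256 := by simp [card_product, h4]

variable [Fintype F]

open Classical in
theorem card_dot_zero {u : Fin 3 → F} (hu : u ≠ 0) :
    (univ.filter (fun v : Fin 3 → F => dot v u = 0)).card ≤ Fintype.card F ^ 2 := by
  obtain ⟨i, hi⟩ := Function.ne_iff.mp hu
  simp only [Pi.zero_apply] at hi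
  have : Fintype.card F ^ 2 = (univ : Finset ({j : Fin 3 // j ≠ i} → F)).card := by
    simp [Fintype.card_subtype_compl]
  rw [this]
  apply card_le_card_of_injOn (fun v (j : {j : Fin 3 // j ≠ i}) => v j.1) (by simp)
  intro v hv w hw h
  simp only [coe_filter, mem_univ, true_and, Set.mem_ofPred_eq, dot] at hv hw
  have h' : ∀ j, j ≠ i → v j = w j := fun j hj => congrFun h ⟨j, hj⟩
  have hvi : v i = w i := by
    apply mul_right_cancel₀ hi
    fin_cases i
    · have := h' 1 (by decide); have := h' 2 (by decide); simp only [Fin.zero_eta]; grind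
    · have := h' 0 (by decide); have := h' 2 (by decide); simp only [Fin.mk_one]; grind
    · have := h' 0 (by decide); have := h' 1 (by decide); simp only [Fin.reduceFinMk]; grind
  funext j
  by_cases hj : j = i
  · rw [hj, hvi]
  · exact h' j hj

open Classical in
theorem card_planes_two {a b : Fin 3 → F} (hab : a ≠ b) :
    (univ.filter (fun π : (Fin 3 → F) × F => dot π.1 a = π.2 ∧ dot π.1 b = π.2)).card
      ≤ Fintype.card F ^ 2 := by
  refine le_trans ?_ (card_dot_zero (sub_ne_zero.mpr hab))
  apply card_le_card_of_injOn (fun π => π.1)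
  · rintro ⟨v, s⟩ h
    simp only [coe_filter, mem_univ, true_and, Set.mem_ofPred_eq, dot, Pi.sub_apply] at h ⊢
    grind
  · rintro ⟨v, s⟩ h ⟨w, t⟩ h' e
    simp only [coe_filter, mem_univ, true_and, Set.mem_ofPred_eq] at h h' e
    subst e
    rw [← h.1, ← h'.1]

open Classical in
theorem card_planes_one (a : Fin 3 → F) :
    (univ.filter (fun π : (Fin 3 → F) × F => dot π.1 a = π.2)).card = Fintype.card F ^ 3 := by
  have : Fintype.card F ^ 3 = (univ : Finset (Fin 3 → F)).card := by simp
  rw [this]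
  symm
  apply card_bij (fun v _ => (v, dot v a))
  · simp
  · intro v _ w _ h
    exact (Prod.ext_iff.1 h).1
  · rintro ⟨v, s⟩ h
    simp only [mem_filter, mem_univ, true_and] at h
    exact ⟨v, mem_univ _, by rw [h]⟩

open Classical in
theorem card_planes_three {a b c : Fin 3 → F} (h : ¬ Col a b c) :
    (univ.filter (fun π : (Fin 3 → F) × F => dot π.1 a = π.2 ∧ dot π.1 b = π.2 ∧
      dot π.1 c = π.2)).card ≤ Fintype.card F := by
  have key : ∃ i : Fin 3, ∀ v : Fin 3 → F, dot v (b - a) = 0 → dot v (c - a) = 0 → v i = 0 →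
      v = 0 := by
    unfold Col at h
    generalize b - a = u at *
    generalize c - a = w at *
    by_cases h2 : u 0 * w 1 = u 1 * w 0
    · by_cases h1 : u 0 * w 2 = u 2 * w 0
      · have h0 : ¬ u 1 * w 2 = u 2 * w 1 := fun h0 => h ⟨h2, h1, h0⟩
        refine ⟨0, fun v e1 e2 e3 => ?_⟩
        simp only [dot] at e1 e2
        have h0' := sub_ne_zero.2 h0
        funext j
        fin_cases j
        · simpa
        · exact (mul_eq_zero_iff_left h0').1 (by grind)
        · exact (mul_eq_zero_iff_left h0').1 (by grind)
      · refine ⟨1, fun v e1 e2 e3 => ?_⟩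
        simp only [dot] at e1 e2
        have h0' := sub_ne_zero.2 h1
        funext j
        fin_cases j
        · exact (mul_eq_zero_iff_left h0').1 (by grind)
        · simpa
        · exact (mul_eq_zero_iff_left h0').1 (by grind)
    · refine ⟨2, fun v e1 e2 e3 => ?_⟩
      simp only [dot] at e1 e2
      have h0' := sub_ne_zero.2 h2
      funext j
      fin_cases j
      · exact (mul_eq_zero_iff_left h0').1 (by grind)
      · exact (mul_eq_zero_iff_left h0').1 (by grind)
      · simpa
  obtain ⟨i, hi⟩ := key
  rw [← Finset.card_univ]
  apply card_le_card_of_injOn (fun π => π.1 i) (by simp)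
  rintro ⟨v, s⟩ hv ⟨w, t⟩ hw e
  simp only [coe_filter, mem_univ, true_and, Set.mem_ofPred_eq] at hv hw e
  have : v - w = 0 := by
    apply hi
    · simp only [dot, Pi.sub_apply] at *; grind
    · simp only [dot, Pi.sub_apply] at *; grind
    · simp [e]
  obtain rfl := sub_eq_zero.1 this
  rw [← hv.1, ← hw.1]

end CritCop

namespace CritCop

open Finset

variable {F : Type} [Field F]

open Classical in
/-- number of points of `P` on the line `ab` -/
noncomputable def lineCount (P : Finset (Fin 3 → F)) (a b : Fin 3 → F) : ℕ :=
  (P.filter (fun z => Col a b z)).card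

open Classical in
/-- distinct collinear triples on lines with at most `K` points -/
noncomputable def triples (P : Finset (Fin 3 → F)) (K : ℝ) :
    Finset ((Fin 3 → F) × (Fin 3 → F) × (Fin 3 → F)) :=
  (P ×ˢ P ×ˢ P).filter (fun τ => τ.1 ≠ τ.2.1 ∧ τ.1 ≠ τ.2.2 ∧ τ.2.1 ≠ τ.2.2 ∧
    Col τ.1 τ.2.1 τ.2.2 ∧ (lineCount P τ.1 τ.2.1 : ℝ) ≤ K)

open Classical in
/-- pairs forming a triple with `p` -/
noncomputable def prs (P : Finset (Fin 3 → F)) (K : ℝ) (p : Fin 3 → F) :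
    Finset ((Fin 3 → F) × (Fin 3 → F)) :=
  (P ×ˢ P).filter (fun τ => p ≠ τ.1 ∧ p ≠ τ.2 ∧ τ.1 ≠ τ.2 ∧
    Col p τ.1 τ.2 ∧ (lineCount P p τ.1 : ℝ) ≤ K)

theorem card_triples (P : Finset (Fin 3 → F)) (K : ℝ) :
    (triples P K).card = ∑ p ∈ P, (prs P K p).card := by
  classical
  rw [← card_sigma]
  apply card_bij' (fun τ _ => (⟨τ.1, τ.2⟩ : Σ _ : Fin 3 → F, (Fin 3 → F) × (Fin 3 → F)))
    (fun τ _ => (τ.1, τ.2))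
  · rintro ⟨p, x, y⟩ h
    simp only [triples, prs, mem_filter, mem_product, mem_sigma] at *
    tauto
  · rintro ⟨p, x, y⟩ h
    simp only [triples, prs, mem_filter, mem_product, mem_sigma] at *
    tauto
  · simp
  · simp

open Classical in
/-- pairs of pairs on different lines through `p` -/
noncomputable def cross (P : Finset (Fin 3 → F)) (K : ℝ) (p : Fin 3 → F) :
    Finset (((Fin 3 → F) × (Fin 3 → F)) × ((Fin 3 → F) × (Fin 3 → F))) :=
  (prs P K p ×ˢ prs P K p).filter (fun σ => ¬ Col p σ.1.1 σ.2.1)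

theorem card_cross (P : Finset (Fin 3 → F)) (K : ℝ) (p : Fin 3 → F) :
    ((prs P K p).card : ℝ) ^ 2 - K ^ 2 * (prs P K p).card ≤ (cross P K p).card := by
  classical
  have h1 := card_filter_add_card_filter_not (s := prs P K p ×ˢ prs P K p)
    (fun σ => Col p σ.1.1 σ.2.1)
  have h2 : (((prs P K p ×ˢ prs P K p).filter (fun σ => Col p σ.1.1 σ.2.1)).card : ℝ)
      ≤ K ^ 2 * (prs P K p).card := by
    rw [card_filter, sum_product]
    push_cast
    rw [mul_comm, ← nsmul_eq_mul]
    apply sum_le_card_nsmul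
    rintro ⟨x, y⟩ hx
    simp only [prs, mem_filter, mem_product] at hx
    obtain ⟨⟨hxP, hyP⟩, n1, n2, n3, hc, hK⟩ := hx
    have : (∑ σ ∈ prs P K p, if Col p x σ.1 then (1 : ℝ) else 0)
        = (((prs P K p).filter (fun σ => Col p x σ.1)).card : ℝ) := by
      rw [card_filter]; push_cast; rfl
    rw [this]
    have h3 : ((prs P K p).filter (fun σ => Col p x σ.1)).card ≤ (lineCount P p x) ^ 2 := by
      rw [sq, lineCount, ← card_product]
      apply card_le_card
      rintro ⟨z, w⟩ h
      simp only [prs, mem_filter, mem_product] at h ⊢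
      refine ⟨⟨h.1.1.1, h.2⟩, h.1.1.2, ?_⟩
      exact Col.trans h.1.2.1 h.2.swap23 h.1.2.2.2.2.1
    calc (((prs P K p).filter (fun σ => Col p x σ.1)).card : ℝ) ≤ (lineCount P p x : ℝ) ^ 2 := by
          exact_mod_cast h3
      _ ≤ K ^ 2 := by gcongr
  have h3 : (((prs P K p ×ˢ prs P K p).filter (fun σ => Col p σ.1.1 σ.2.1)).card : ℝ)
      + (cross P K p).card = (prs P K p).card ^ 2 := by
    rw [card_product] at h1
    rw [sq]
    exact_mod_cast h1
  linarith

theorem sum_cross_le (P : Finset (Fin 3 → F)) (K : ℝ) :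
    ∑ p ∈ P, (cross P K p).card ≤ (quads P).card := by
  classical
  rw [← card_sigma]
  apply card_le_card_of_injOn (fun τ => (τ.2.1.1, τ.2.1.2, τ.2.2.1, τ.2.2.2))
  · rintro ⟨p, ⟨x, y⟩, ⟨z, w⟩⟩ h
    simp only [mem_coe, cross, prs, quads, mem_filter, mem_product, mem_sigma] at h ⊢
    obtain ⟨hp, ⟨⟨⟨hx, hy⟩, px, py, xy, c1, -⟩, ⟨⟨hz, hw⟩, pz, pw, zw, c2, -⟩⟩, hn⟩ := h
    refine ⟨⟨hx, hy, hz, hw⟩, ?_, ?_, ?_, ?_, ?_⟩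
    · obtain ⟨v, s, hv, h1, h2, h3⟩ := exists_normal hn
      exact ⟨v, s, hv, h2, Col.dot_eq px c1 h1 h2, h3, Col.dot_eq pz c2 h1 h3⟩
    · intro h
      exact hn (Col.three xy c1.swap12.swap23 (col_aba _ _) h)
    · intro h
      have h1 : Col p x w := Col.three xy c1.swap12.swap23 (col_aba _ _) h
      exact hn (Col.trans pw h1.swap23 c2.swap23)
    · intro h
      have h1 : Col p z x := Col.three zw c2.swap12.swap23 (col_aba _ _) h.swap12.swap23
      exact hn h1.swap23
    · intro h
      have h1 : Col p z y := Col.three zw c2.swap12.swap23 (col_aba _ _) h.swap12.swap23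
      exact hn (Col.trans py c1.swap23 h1.swap23)
  · rintro ⟨p, ⟨x, y⟩, ⟨z, w⟩⟩ h ⟨p', ⟨x', y'⟩, ⟨z', w'⟩⟩ h' e
    simp only [Prod.mk.injEq] at e
    obtain ⟨rfl, rfl, rfl, rfl⟩ := e
    simp only [mem_coe, cross, prs, mem_filter, mem_product, mem_sigma] at h h'
    obtain ⟨hp, ⟨⟨⟨hx, hy⟩, px, py, xy, c1, -⟩, ⟨⟨hz, hw⟩, pz, pw, zw, c2, -⟩⟩, hn⟩ := h
    obtain ⟨hp', ⟨⟨-, px', py', -, c1', -⟩, ⟨-, pz', pw', -, c2', -⟩⟩, hn'⟩ := h'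
    by_cases hpp : p = p'
    · subst hpp; rfl
    · exfalso
      have e1 : Col p p' x := Col.three xy c1.swap12.swap23 c1'.swap12.swap23 (col_aba _ _)
      have e2 : Col p p' z := Col.three zw c2.swap12.swap23 c2'.swap12.swap23 (col_aba _ _)
      exact hn (Col.trans hpp e1 e2)

theorem caseB (P : Finset (Fin 3 → F)) (K : ℝ) :
    ((triples P K).card : ℝ) ^ 2 - P.card * K ^ 2 * (triples P K).card
      ≤ P.card * (quads P).card := by
  have h1 : (∑ p ∈ P, ((prs P K p).card : ℝ)) ^ 2 ≤ P.card * ∑ p ∈ P, ((prs P K p).card : ℝ) ^ 2 :=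
    sq_sum_le_card_mul_sum_sq
  have h2 : ∑ p ∈ P, (((prs P K p).card : ℝ) ^ 2 - K ^ 2 * (prs P K p).card)
      ≤ ∑ p ∈ P, ((cross P K p).card : ℝ) := sum_le_sum fun p _ => card_cross P K p
  have h3 : ∑ p ∈ P, ((cross P K p).card : ℝ) ≤ (quads P).card := by
    exact_mod_cast sum_cross_le P K
  have h4 : ((triples P K).card : ℝ) = ∑ p ∈ P, ((prs P K p).card : ℝ) := by
    exact_mod_cast card_triples P K
  rw [sum_sub_distrib, ← mul_sum, ← h4] at h2
  rw [← h4] at h1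
  have h5 := mul_le_mul_of_nonneg_left (h2.trans h3) (Nat.cast_nonneg (α := ℝ) P.card)
  linarith

open Classical in
/-- points of `P` on a plane -/
noncomputable def sec (P : Finset (Fin 3 → F)) (π : (Fin 3 → F) × F) : Finset (Fin 3 → F) :=
  P.filter (fun x => dot π.1 x = π.2)

open Classical in
/-- distinct collinear triples -/
noncomputable def ctr (A : Finset (Fin 3 → F)) :
    Finset ((Fin 3 → F) × (Fin 3 → F) × (Fin 3 → F)) :=
  (A ×ˢ A ×ˢ A).filter (fun τ => τ.1 ≠ τ.2.1 ∧ τ.1 ≠ τ.2.2 ∧ τ.2.1 ≠ τ.2.2 ∧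
    Col τ.1 τ.2.1 τ.2.2)

open Classical in
/-- quadruples with no three collinear -/
noncomputable def gen (A : Finset (Fin 3 → F)) :
    Finset ((Fin 3 → F) × (Fin 3 → F) × (Fin 3 → F) × (Fin 3 → F)) :=
  (A ×ˢ A ×ˢ A ×ˢ A).filter (fun x => ¬ Col x.1 x.2.1 x.2.2.1 ∧ ¬ Col x.1 x.2.1 x.2.2.2 ∧
    ¬ Col x.1 x.2.2.1 x.2.2.2 ∧ ¬ Col x.2.1 x.2.2.1 x.2.2.2)

theorem card_gen (A : Finset (Fin 3 → F)) :
    A.card ^ 4 ≤ (gen A).card + 6 * A.card ^ 3 + 4 * (A.card * (ctr A).card) := by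
  classical
  let U := A ×ˢ A ×ˢ A ×ˢ A
  let C := A ×ˢ A ×ˢ A
  let D := A ×ˢ ctr A
  have hU : U.card = A.card ^ 4 := by simp only [U, card_product]; ring
  have hC : C.card = A.card ^ 3 := by simp only [C, card_product]; ring
  have hD : D.card = A.card * (ctr A).card := by simp only [D, card_product]
  have hsub : U ⊆ gen A ∪
      (C.image (fun τ => (τ.1, τ.1, τ.2.1, τ.2.2)) ∪ C.image (fun τ => (τ.1, τ.2.1, τ.1, τ.2.2)) ∪
       C.image (fun τ => (τ.1, τ.2.1, τ.2.2, τ.1)) ∪ C.image (fun τ => (τ.2.1, τ.1, τ.1, τ.2.2)) ∪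
       C.image (fun τ => (τ.2.1, τ.1, τ.2.2, τ.1)) ∪ C.image (fun τ => (τ.2.1, τ.2.2, τ.1, τ.1))) ∪
      (D.image (fun τ => (τ.2.1, τ.2.2.1, τ.2.2.2, τ.1)) ∪
       D.image (fun τ => (τ.2.1, τ.2.2.1, τ.1, τ.2.2.2)) ∪
       D.image (fun τ => (τ.2.1, τ.1, τ.2.2.1, τ.2.2.2)) ∪
       D.image (fun τ => (τ.1, τ.2.1, τ.2.2.1, τ.2.2.2))) := by
    rintro ⟨a, b, c, d⟩ h
    simp only [U, C, D, ctr, gen, mem_union, mem_image, mem_filter, mem_product, Prod.exists,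
      Prod.mk.injEq] at h ⊢
    obtain ⟨ha, hb, hc, hd⟩ := h
    by_cases e1 : a = b
    · subst e1; left; right; iterate 5 left
      exact ⟨a, c, d, by tauto⟩
    by_cases e2 : a = c
    · subst e2; left; right; iterate 4 left
      right; exact ⟨a, b, d, by tauto⟩
    by_cases e3 : a = d
    · subst e3; left; right; iterate 3 left
      right; exact ⟨a, b, c, by tauto⟩
    by_cases e4 : b = c
    · subst e4; left; right; iterate 2 left
      right; exact ⟨b, a, d, by tauto⟩
    by_cases e5 : b = d
    · subst e5; left; right; left
      right; exact ⟨b, a, c, by tauto⟩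
    by_cases e6 : c = d
    · subst e6; left; right; right
      exact ⟨c, a, b, by tauto⟩
    by_cases f1 : Col a b c
    · right; iterate 3 left
      exact ⟨d, a, b, c, by tauto⟩
    by_cases f2 : Col a b d
    · right; iterate 2 left
      right; exact ⟨c, a, b, d, by tauto⟩
    by_cases f3 : Col a c d
    · right; left; right
      exact ⟨b, a, c, d, by tauto⟩
    by_cases f4 : Col b c d
    · right; right
      exact ⟨a, b, c, d, by tauto⟩
    left; left
    tauto
  have h := card_le_card hsub
  have i1 : ∀ f : (Fin 3 → F) × (Fin 3 → F) × (Fin 3 → F) →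
      (Fin 3 → F) × (Fin 3 → F) × (Fin 3 → F) × (Fin 3 → F),
      (C.image f).card ≤ A.card ^ 3 := fun f => hC ▸ card_image_le
  have i2 : ∀ f : (Fin 3 → F) × (Fin 3 → F) × (Fin 3 → F) × (Fin 3 → F) →
      (Fin 3 → F) × (Fin 3 → F) × (Fin 3 → F) × (Fin 3 → F),
      (D.image f).card ≤ A.card * (ctr A).card := fun f => hD ▸ card_image_le
  rw [← hU]
  refine h.trans ?_
  have u3 : ∀ {x y : Finset ((Fin 3 → F) × (Fin 3 → F) × (Fin 3 → F) × (Fin 3 → F))} {m n : ℕ},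
      x.card ≤ m → y.card ≤ n → (x ∪ y).card ≤ m + n :=
    fun hx hy => (card_union_le _ _).trans (add_le_add hx hy)
  refine (u3 (u3 le_rfl (u3 (u3 (u3 (u3 (u3 (i1 _) (i1 _)) (i1 _)) (i1 _)) (i1 _)) (i1 _)))
    (u3 (u3 (u3 (i2 _) (i2 _)) (i2 _)) (i2 _))).trans ?_
  omega

variable [Fintype F]

theorem sum_sec (P : Finset (Fin 3 → F)) :
    ∑ π : (Fin 3 → F) × F, (sec P π).card = P.card * Fintype.card F ^ 3 := by
  classical
  simp only [sec, card_filter]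
  rw [sum_comm]
  simp only [← card_filter, card_planes_one, sum_const, smul_eq_mul]

theorem sum_sec_sq (P : Finset (Fin 3 → F)) :
    ∑ π : (Fin 3 → F) × F, (sec P π).card ^ 2
      ≤ P.card * Fintype.card F ^ 3 + P.card ^ 2 * Fintype.card F ^ 2 := by
  classical
  have h1 : ∀ π : (Fin 3 → F) × F, (sec P π).card ^ 2
      = ∑ x ∈ P, ∑ y ∈ P, if dot π.1 x = π.2 ∧ dot π.1 y = π.2 then 1 else 0 := by
    intro π
    rw [sq, ← card_product, ← sum_product', ← card_filter]
    congr 1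
    ext ⟨x, y⟩
    simp only [sec, mem_product, mem_filter]
    tauto
  simp only [h1]
  rw [sum_comm]
  have h2 : ∀ x ∈ P, ∑ π : (Fin 3 → F) × F, ∑ y ∈ P,
      (if dot π.1 x = π.2 ∧ dot π.1 y = π.2 then 1 else 0)
      ≤ Fintype.card F ^ 3 + P.card * Fintype.card F ^ 2 := by
    intro x hx
    rw [sum_comm]
    simp only [← card_filter]
    calc _ ≤ ∑ y ∈ P, ((if x = y then Fintype.card F ^ 3 else 0) + Fintype.card F ^ 2) := by
          apply sum_le_sum
          intro y _
          by_cases h : x = y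
          · subst h
            simp only [and_self, if_true, card_planes_one]
            omega
          · simpa [h] using card_planes_two h
      _ = _ := by
          rw [sum_add_distrib, sum_ite_eq, if_pos hx, sum_const, smul_eq_mul]
  refine (sum_le_card_nsmul _ _ _ h2).trans (le_of_eq ?_)
  rw [smul_eq_mul]; ring

theorem variance (P : Finset (Fin 3 → F)) :
    ∑ π : (Fin 3 → F) × F, ((sec P π).card - (P.card : ℝ) / Fintype.card F) ^ 2
      ≤ P.card * (Fintype.card F : ℝ) ^ 3 := by
  have hq : (0 : ℝ) < Fintype.card F := by exact_mod_cast Fintype.card_pos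
  have h1 : ∑ π : (Fin 3 → F) × F, ((sec P π).card : ℝ) = P.card * (Fintype.card F : ℝ) ^ 3 := by
    exact_mod_cast sum_sec P
  have h2 : ∑ π : (Fin 3 → F) × F, ((sec P π).card : ℝ) ^ 2
      ≤ P.card * (Fintype.card F : ℝ) ^ 3 + P.card ^ 2 * (Fintype.card F : ℝ) ^ 2 := by
    exact_mod_cast sum_sec_sq P
  have h3 : ∑ π : (Fin 3 → F) × F, ((sec P π).card - (P.card : ℝ) / Fintype.card F) ^ 2
      = ∑ π : (Fin 3 → F) × F, ((sec P π).card : ℝ) ^ 2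
        - 2 * ((P.card : ℝ) / Fintype.card F) * ∑ π : (Fin 3 → F) × F, ((sec P π).card : ℝ)
        + (Fintype.card F : ℝ) ^ 4 * ((P.card : ℝ) / Fintype.card F) ^ 2 := by
    simp only [sub_sq, sum_add_distrib, sum_sub_distrib, mul_sum, sum_const, card_univ,
      Fintype.card_prod, Fintype.card_pi, prod_const, Fintype.card_fin, nsmul_eq_mul]
    congr 1
    · congr 1
      apply sum_congr rfl
      intros; ring
    · push_cast; ring
  rw [h3, h1]
  have h4 : 2 * ((P.card : ℝ) / Fintype.card F) * (P.card * (Fintype.card F : ℝ) ^ 3)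
      = 2 * (P.card ^ 2 * (Fintype.card F : ℝ) ^ 2) := by field_simp
  have h5 : (Fintype.card F : ℝ) ^ 4 * ((P.card : ℝ) / Fintype.card F) ^ 2
      = P.card ^ 2 * (Fintype.card F : ℝ) ^ 2 := by field_simp
  rw [h4, h5]
  linarith

open Classical in
/-- planes with a typical number of points -/
noncomputable def good (P : Finset (Fin 3 → F)) : Finset ((Fin 3 → F) × F) :=
  univ.filter (fun π => (P.card : ℝ) / Fintype.card F / 2 ≤ (sec P π).card ∧
    ((sec P π).card : ℝ) ≤ 2 * ((P.card : ℝ) / Fintype.card F))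

theorem card_good (P : Finset (Fin 3 → F)) (h : 8 * (Fintype.card F : ℝ) ≤ P.card) :
    (Fintype.card F : ℝ) ^ 4 / 2 ≤ (good P).card := by
  classical
  have hq : (0 : ℝ) < Fintype.card F := by exact_mod_cast Fintype.card_pos
  have hn : (0 : ℝ) < P.card := by linarith
  have h0 := card_filter_add_card_filter_not (s := (univ : Finset ((Fin 3 → F) × F)))
    (fun π => (P.card : ℝ) / Fintype.card F / 2 ≤ (sec P π).card ∧
    ((sec P π).card : ℝ) ≤ 2 * ((P.card : ℝ) / Fintype.card F))
  set B := univ.filter (fun π : (Fin 3 → F) × F =>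
    ¬ ((P.card : ℝ) / Fintype.card F / 2 ≤ (sec P π).card ∧
    ((sec P π).card : ℝ) ≤ 2 * ((P.card : ℝ) / Fintype.card F))) with hB
  change (good P).card + B.card = _ at h0
  have h1 : ((good P).card : ℝ) + B.card = (Fintype.card F : ℝ) ^ 4 := by
    have : (univ : Finset ((Fin 3 → F) × F)).card = Fintype.card F ^ 4 := by
      simp; ring
    rw [this] at h0
    exact_mod_cast h0
  have h2 : (B.card : ℝ) * (((P.card : ℝ) / Fintype.card F) ^ 2 / 4)
      ≤ P.card * (Fintype.card F : ℝ) ^ 3 := by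
    refine le_trans ?_ (variance P)
    rw [← nsmul_eq_mul]
    refine le_trans ?_ (sum_le_sum_of_subset_of_nonneg (subset_univ B) (fun _ _ _ => sq_nonneg _))
    apply card_nsmul_le_sum
    intro π hπ
    simp only [hB, mem_filter, mem_univ, true_and, not_and_or, not_le] at hπ
    have hpos : (0 : ℝ) < (P.card : ℝ) / Fintype.card F := by positivity
    rcases hπ with hπ | hπ <;> nlinarith
  have h3 : (B.card : ℝ) * P.card ≤ 4 * (Fintype.card F : ℝ) ^ 5 := by
    have e : (B.card : ℝ) * (((P.card : ℝ) / Fintype.card F) ^ 2 / 4) =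
      (B.card * P.card) * (P.card / (4 * (Fintype.card F : ℝ) ^ 2)) := by field_simp
    rw [e] at h2
    have e2 : (P.card : ℝ) * (Fintype.card F : ℝ) ^ 3 =
      (4 * (Fintype.card F : ℝ) ^ 5) * (P.card / (4 * (Fintype.card F : ℝ) ^ 2)) := by field_simp
    rw [e2] at h2
    exact le_of_mul_le_mul_right h2 (by positivity)
  have h4 : (B.card : ℝ) * (8 * Fintype.card F) ≤ 4 * (Fintype.card F : ℝ) ^ 5 :=
    (mul_le_mul_of_nonneg_left h (Nat.cast_nonneg _)).trans h3
  have h5 : (B.card : ℝ) ≤ (Fintype.card F : ℝ) ^ 4 / 2 := by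
    apply le_of_mul_le_mul_right _ (show (0 : ℝ) < 8 * Fintype.card F by positivity)
    refine h4.trans (le_of_eq ?_); ring
  linarith

theorem double_count {α β : Type} [Fintype α] (G : Finset α) (T : Finset β) (r : α → β → Prop)
    [∀ π τ, Decidable (r π τ)]
    (m : ℕ) (h : ∀ τ ∈ T, (univ.filter (fun π => r π τ)).card ≤ m) :
    ∑ π ∈ G, (T.filter (fun τ => r π τ)).card ≤ T.card * m := by
  calc _ ≤ ∑ π, (T.filter (fun τ => r π τ)).card := sum_le_sum_of_subset (subset_univ _)
    _ = ∑ τ ∈ T, (univ.filter (fun π => r π τ)).card := by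
        simp only [card_filter]; rw [sum_comm]
    _ ≤ _ := by
        rw [← smul_eq_mul]
        exact sum_le_card_nsmul _ _ _ h

theorem sum_ctr_le (P : Finset (Fin 3 → F)) :
    ∑ π ∈ good P, (ctr (sec P π)).card
      ≤ (triples P (2 * ((P.card : ℝ) / Fintype.card F))).card * Fintype.card F ^ 2 := by
  classical
  set T := triples P (2 * ((P.card : ℝ) / Fintype.card F)) with hT
  calc ∑ π ∈ good P, (ctr (sec P π)).card
      ≤ ∑ π ∈ good P, (T.filter (fun τ => dot π.1 τ.1 = π.2 ∧ dot π.1 τ.2.1 = π.2)).card := by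
        apply sum_le_sum
        intro π hπ
        apply card_le_card
        rintro ⟨p, x, y⟩ h
        have hπ2 := (mem_filter.1 hπ).2.2
        simp only [hT, ctr, triples, sec, mem_filter, mem_product] at h ⊢
        obtain ⟨⟨⟨hp, hp'⟩, ⟨hx, hx'⟩, ⟨hy, hy'⟩⟩, h1, h2, h3, h4⟩ := h
        refine ⟨⟨⟨hp, hx, hy⟩, h1, h2, h3, h4, le_trans ?_ hπ2⟩, hp', hx'⟩
        rw [lineCount, sec, Nat.cast_le]
        apply card_le_card
        intro z hz
        rw [mem_filter] at hz ⊢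
        exact ⟨hz.1, Col.dot_eq h1 hz.2 hp' hx'⟩
    _ ≤ _ := by
        apply double_count (r := fun (π : (Fin 3 → F) × F)
          (τ : (Fin 3 → F) × (Fin 3 → F) × (Fin 3 → F)) =>
          dot π.1 τ.1 = π.2 ∧ dot π.1 τ.2.1 = π.2)
        rintro ⟨p, x, y⟩ h
        simp only [hT, triples, mem_filter] at h
        convert card_planes_two h.2.1

theorem sum_gen_le (P : Finset (Fin 3 → F)) (hP : 0 < P.card) (hq : 2 < Fintype.card F) :
    ∑ π ∈ good P, (gen (sec P π)).card ≤ (quads P).card * Fintype.card F := by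
  classical
  have hq' : (2 : ℝ) < Fintype.card F := by exact_mod_cast hq
  have hP' : (0 : ℝ) < P.card := by exact_mod_cast hP
  calc ∑ π ∈ good P, (gen (sec P π)).card
      ≤ ∑ π ∈ good P, ((quads P).filter (fun τ => dot π.1 τ.1 = π.2 ∧ dot π.1 τ.2.1 = π.2 ∧
          dot π.1 τ.2.2.1 = π.2)).card := by
        apply sum_le_sum
        rintro ⟨v, s⟩ hπ
        apply card_le_card
        have hv : v ≠ 0 := by
          rintro rfl
          simp only [good, mem_filter, mem_univ, true_and] at hπ
          by_cases hs : s = 0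
          · have : sec P (0, s) = P := by
              apply filter_true_of_mem; simp [dot, hs]
            rw [this] at hπ
            have h2 := hπ.2
            rw [← mul_div_assoc, le_div_iff₀ (by linarith)] at h2
            nlinarith
          · have : sec P (0, s) = ∅ := by
              apply filter_false_of_mem; simp [dot, Ne.symm hs]
            rw [this] at hπ
            have h2 := hπ.1
            have : 0 < (P.card : ℝ) / Fintype.card F / 2 := by positivity
            simp only [card_empty, Nat.cast_zero] at h2
            linarith
        rintro ⟨a, b, c, d⟩ h
        simp only [gen, quads, sec, mem_filter, mem_product] at h ⊢
        obtain ⟨⟨⟨ha, ha'⟩, ⟨hb, hb'⟩, ⟨hc, hc'⟩, ⟨hd, hd'⟩⟩, h⟩ := h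
        exact ⟨⟨⟨ha, hb, hc, hd⟩, ⟨v, s, hv, ha', hb', hc', hd'⟩, h⟩, ha', hb', hc'⟩
    _ ≤ _ := by
        apply double_count (r := fun (π : (Fin 3 → F) × F)
          (τ : (Fin 3 → F) × (Fin 3 → F) × (Fin 3 → F) × (Fin 3 → F)) =>
          dot π.1 τ.1 = π.2 ∧ dot π.1 τ.2.1 = π.2 ∧ dot π.1 τ.2.2.1 = π.2)
        rintro ⟨a, b, c, d⟩ h
        simp only [quads, mem_filter] at h
        convert card_planes_three h.2.2.1

theorem caseA (P : Finset (Fin 3 → F)) (hq : 2 < Fintype.card F)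
    (h : 24 * (Fintype.card F : ℝ) ≤ P.card) :
    (P.card : ℝ) ^ 4 / 64 - 8 * P.card * Fintype.card F *
      (triples P (2 * ((P.card : ℝ) / Fintype.card F))).card
      ≤ (quads P).card * Fintype.card F := by
  have hq' : (2 : ℝ) < Fintype.card F := by exact_mod_cast hq
  have hP' : (0 : ℝ) < P.card := by linarith
  have hP : 0 < P.card := by exact_mod_cast hP'
  have h1 : ∑ π ∈ good P, ((gen (sec P π)).card : ℝ) ≤ (quads P).card * (Fintype.card F : ℝ) := by
    exact_mod_cast sum_gen_le P hP hq
  have h2 : ∑ π ∈ good P, ((ctr (sec P π)).card : ℝ)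
      ≤ (triples P (2 * ((P.card : ℝ) / Fintype.card F))).card * (Fintype.card F : ℝ) ^ 2 := by
    exact_mod_cast sum_ctr_le P
  set n : ℝ := (P.card : ℝ) with hn
  set q : ℝ := (Fintype.card F : ℝ) with hqq
  set T : ℝ := ((triples P (2 * (n / q))).card : ℝ) with hT
  have hr : 24 ≤ n / q := by rw [le_div_iff₀ (by linarith)]; exact h
  have h3 : ∀ π ∈ good P, (n / q) ^ 4 / 32 - 8 * (n / q) * ((ctr (sec P π)).card : ℝ)
      ≤ ((gen (sec P π)).card : ℝ) := by
    intro π hπ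
    simp only [good, mem_filter, mem_univ, true_and] at hπ
    rw [← hn, ← hqq] at hπ
    obtain ⟨hl, hu⟩ := hπ
    have hg : ((sec P π).card : ℝ) ^ 4 ≤ (gen (sec P π)).card + 6 * ((sec P π).card : ℝ) ^ 3
        + 4 * ((sec P π).card * (ctr (sec P π)).card) := by
      exact_mod_cast card_gen (sec P π)
    set N : ℝ := ((sec P π).card : ℝ)
    set t : ℝ := ((ctr (sec P π)).card : ℝ)
    have ht : 0 ≤ t := Nat.cast_nonneg _
    have a1 : N * t ≤ 2 * (n / q) * t := mul_le_mul_of_nonneg_right hu ht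
    have a2 : 12 * N ^ 3 ≤ N ^ 4 := by
      have : 0 ≤ N ^ 3 := by positivity
      nlinarith
    have a3 : (n / q / 2) ^ 4 ≤ N ^ 4 := by gcongr
    have a4 : (n / q / 2) ^ 4 = (n / q) ^ 4 / 16 := by ring
    linarith
  have h4 := sum_le_sum h3
  rw [sum_sub_distrib, ← mul_sum, sum_const, nsmul_eq_mul] at h4
  have h5 := card_good P (by linarith)
  rw [← hqq] at h5
  have h6 : q ^ 4 / 2 * ((n / q) ^ 4 / 32) ≤ (good P).card * ((n / q) ^ 4 / 32) := by gcongr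
  have h7 : q ^ 4 / 2 * ((n / q) ^ 4 / 32) = n ^ 4 / 64 := by field_simp; norm_num
  have h8 : 8 * (n / q) * ∑ π ∈ good P, ((ctr (sec P π)).card : ℝ) ≤ 8 * (n / q) * (T * q ^ 2) := by
    gcongr
  have h9 : 8 * (n / q) * (T * q ^ 2) = 8 * n * q * T := by field_simp
  linarith

theorem main_bound (P : Finset (Fin 3 → F)) (h : 2 ^ 30 * (Fintype.card F : ℝ) ≤ P.card) :
    (P.card : ℝ) ^ 4 / 128 ≤ (quads P).card * Fintype.card F := by
  have hq0 : (0 : ℝ) < Fintype.card F := by exact_mod_cast Fintype.card_pos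
  have hle : (P.card : ℝ) ≤ (Fintype.card F : ℝ) ^ 3 := by
    have := card_le_univ P
    simp only [Fintype.card_pi, prod_const, card_univ, Fintype.card_fin] at this
    exact_mod_cast this
  have hq : (2 : ℝ) ^ 15 ≤ Fintype.card F := by
    have h1 : (2 ^ 15 : ℝ) ^ 2 ≤ (Fintype.card F : ℝ) ^ 2 := by
      apply le_of_mul_le_mul_right _ hq0
      nlinarith
    exact le_of_sq_le_sq h1 hq0.le
  have hq2 : 2 < Fintype.card F := by
    have : (2 : ℝ) < Fintype.card F := by linarith
    exact_mod_cast this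
  have hA := caseA P hq2 (by linarith)
  have hB := caseB P (2 * ((P.card : ℝ) / Fintype.card F))
  set n : ℝ := (P.card : ℝ) with hn
  set q : ℝ := (Fintype.card F : ℝ) with hqq
  set T : ℝ := ((triples P (2 * (n / q))).card : ℝ) with hT
  set Q : ℝ := ((quads P).card : ℝ)
  have hn0 : 0 < n := by nlinarith
  by_cases hc : T * q ≤ n ^ 3 / 2 ^ 12
  · have : n * (T * q) ≤ n * (n ^ 3 / 2 ^ 12) := by gcongr
    nlinarith
  · push Not at hc
    have hT0 : 0 < T := by
      have : 0 < T * q := lt_trans (by positivity) hc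
      exact pos_of_mul_pos_left this hq0.le
    -- T ≥ 2 n K²
    have b1 : n * (2 * (n / q)) ^ 2 ≤ T / 2 := by
      have e : n * (2 * (n / q)) ^ 2 = 4 * n ^ 3 / q ^ 2 := by field_simp; norm_num
      rw [e, div_le_iff₀ (by positivity)]
      have : n ^ 3 / 2 ^ 12 * 2 ^ 15 ≤ T * q * q := by gcongr
      nlinarith
    have b2 : T * T / 2 ≤ n * Q := by nlinarith
    have b3 : (n ^ 3 / 2 ^ 12) * (n ^ 3 / 2 ^ 12) ≤ (T * q) * (T * q) := by gcongr
    have b4 : n ^ 5 / 2 ^ 25 ≤ Q * q ^ 2 := by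
      apply le_of_mul_le_mul_left _ hn0
      nlinarith [mul_le_mul_of_nonneg_right b2 (sq_nonneg q)]
    have b5 : (2 ^ 30 * q) * n ^ 4 / 2 ^ 25 ≤ q * (Q * q) := by
      have : (2 ^ 30 * q) * n ^ 4 ≤ n * n ^ 4 := by gcongr
      nlinarith
    have b6 : 2 ^ 5 * n ^ 4 ≤ Q * q := by
      apply le_of_mul_le_mul_left _ hq0
      nlinarith
    have : 0 ≤ n ^ 4 := by positivity
    linarith

end CritCop

theorem supersaturation_critical_coplanar_Fq3 :
    ∃ c : ℝ, 0 < c ∧ ∃ c' : ℝ, 0 < c' ∧ ∀ q : ℕ, IsPrimePow q →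
      ∀ (F : Type) [Field F] [Fintype F], Fintype.card F = q →
        ∀ P : Finset (Fin 3 → F), c * (q : ℝ) ≤ (P.card : ℝ) →
          c' * (P.card : ℝ) ^ 4 / (q : ℝ)
            ≤ (({t : Finset (Fin 3 → F) | t ⊆ P ∧
                  IsCriticalCoplanar F t}).ncard : ℝ) := by
  refine ⟨2 ^ 30, by positivity, 1 / 2 ^ 15, by positivity, ?_⟩
  intro q _ F _ _ hF P hP
  subst hF
  have hq0 : (0 : ℝ) < Fintype.card F := by exact_mod_cast Fintype.card_pos
  have h1 := CritCop.main_bound P hP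
  have h2 : ((CritCop.quads P).card : ℝ) ≤ 256 *
      (({t : Finset (Fin 3 → F) | t ⊆ P ∧ IsCriticalCoplanar F t}).ncard : ℝ) := by
    exact_mod_cast CritCop.card_quads_le P
  rw [div_le_iff₀ hq0]
  have h3 := mul_le_mul_of_nonneg_right h2 hq0.le
  linarith
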